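/- Let I_1 and I_2 be linear ideals in S = k[x_0,...,x_n]. Then the intersection I_1 ∩ I_2 is 2-regular. -/

import Mathlib

open MvPolynomial
attribute [local instance] MvPolynomial.gradedAlgebra

/-- The polynomial ring `S = k[x_0, …, x_n]`. -/
noncomputable abbrev MvP (k : Type*) [Field k] (n : ℕ) : Type _ := MvPolynomial (Fin (n+1)) k

/-- An ideal generated by linear forms. -/
def IsLinearIdeal {k : Type*} [Field k] {n : ℕ} (I : Ideal (MvP k n)) : Prop :=
  ∃ T : Set (MvP k n), T ⊆ (homogeneousSubmodule (Fin (n+1)) k 1 : Submodule k (MvP k n)) ∧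
    I = Ideal.span T

/-- `I` is `r`-regular (Castelnuovo–Mumford): there is a graded free resolution
`⋯ → ⊕_α S(-e_{α,i}) → ⋯ → ⊕_α S(-e_{α,0}) → I → 0` with all `e_{α,i} ≤ r + i`.
The `i`-th free module is `Fin (ρ i) → S` with generator degrees `e i`; gradedness of the
maps is expressed by homogeneity of the matrix entries (images of the standard basis). -/
def IdealIsRegular {k : Type*} [Field k] {n : ℕ} (I : Ideal (MvP k n)) (r : ℤ) : Prop :=
  ∃ (ρ : ℕ → ℕ) (e : ∀ i, Fin (ρ i) → ℕ)
    (δ : ∀ i, (Fin (ρ (i+1)) → MvP k n) →ₗ[MvP k n] (Fin (ρ i) → MvP k n))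
    (ε : (Fin (ρ 0) → MvP k n) →ₗ[MvP k n] MvP k n),
    LinearMap.range ε = I ∧
    LinearMap.ker ε = LinearMap.range (δ 0) ∧
    (∀ i, LinearMap.ker (δ i) = LinearMap.range (δ (i+1))) ∧
    (∀ β, ε (Pi.single β 1) ∈ homogeneousSubmodule (Fin (n+1)) k (e 0 β)) ∧
    (∀ i (β : Fin (ρ (i+1))) (α : Fin (ρ i)), δ i (Pi.single β 1) α = 0 ∨
      (e i α ≤ e (i+1) β ∧
        δ i (Pi.single β 1) α ∈ homogeneousSubmodule (Fin (n+1)) k (e (i+1) β - e i α))) ∧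
    (∀ i (β : Fin (ρ i)), (e i β : ℤ) ≤ r + i)

/-!
Ideals generated by linear forms are prime. Hence, as a linear ideal `B` grows to `I₁` by one linear
form `y` at a time, `B ⊓ I₂` grows by generators of degree at most `2` whose colon ideals are again
linear: if `y ∈ B ⊔ I₂`, then `y` may be taken in `I₂` and is the new generator; otherwise the new
generators are the products of `y` with the linear generators of `I₂`. A module with such linear
quotients in degrees at most `r` has a syzygy module with linear quotients in degrees at most
`r + 1`: the syzygies with vanishing first coordinate are those of the remaining generators, and
the first coordinates of all syzygies form a linear colon ideal. Iterating gives the resolution.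
-/

section Graded

open DirectSum

variable {ι M M' τ τ' : Type*} [DecidableEq ι] [AddCommMonoid M] [AddCommMonoid M']
  [SetLike τ M] [AddSubmonoidClass τ M] [SetLike τ' M'] [AddSubmonoidClass τ' M']

theorem decompose_map_of_mapsTo (ℳ : ι → τ) (ℳ' : ι → τ') [Decomposition ℳ] [Decomposition ℳ']
    (f : M →+ M') (hf : ∀ i, ∀ x ∈ ℳ i, f x ∈ ℳ' i) (x : M) (i : ι) :
    (decompose ℳ' (f x) i : M') = f (decompose ℳ x i) := by
  induction x using Decomposition.inductionOn ℳ with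
  | zero => simp
  | @homogeneous j x =>
    by_cases hji : j = i
    · subst hji
      rw [decompose_of_mem_same ℳ' (hf _ _ x.2), decompose_of_mem_same ℳ x.2]
    · rw [decompose_of_mem_ne ℳ' (hf _ _ x.2) hji, decompose_of_mem_ne ℳ x.2 hji, map_zero]
  | add x y hx hy => simp [decompose_add, hx, hy]

theorem exists_mem_eq_of_mapsTo (ℳ : ι → τ) (ℳ' : ι → τ') [Decomposition ℳ] [Decomposition ℳ']
    (f : M →+ M') (hf : ∀ i, ∀ x ∈ ℳ i, f x ∈ ℳ' i) {x : M} {i : ι} (hx : f x ∈ ℳ' i) :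
    ∃ y ∈ ℳ i, f y = f x :=
  ⟨decompose ℳ x i, SetLike.coe_mem _, by
    rw [← decompose_map_of_mapsTo ℳ ℳ' f hf, decompose_of_mem_same ℳ' hx]⟩

theorem exists_add_eq_of_mem_sup_of_isHomogeneous {A : Type*} [Semiring A] [AddMonoid ι]
    [SetLike τ A] [AddSubmonoidClass τ A] {𝒜 : ι → τ} [GradedRing 𝒜] {I J : Ideal A}
    (hI : I.IsHomogeneous 𝒜) (hJ : J.IsHomogeneous 𝒜) {i : ι} {x : A} (hx : x ∈ 𝒜 i)
    (hxIJ : x ∈ I ⊔ J) : ∃ a ∈ I, ∃ b ∈ J, b ∈ 𝒜 i ∧ a + b = x := by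
  obtain ⟨a, ha, b, hb, hab⟩ := Submodule.mem_sup.1 hxIJ
  refine ⟨_, hI i ha, _, hJ i hb, SetLike.coe_mem _, ?_⟩
  rw [← AddMemClass.coe_add, ← DirectSum.add_apply, ← decompose_add, hab,
    decompose_of_mem_same _ hx]

end Graded

section FreeGrading

open DirectSum

variable {k R ι : Type*} [CommRing k] [CommRing R] [Algebra k R] (𝒜 : ℕ → Submodule k R)

/-- The grading of the free module `⨁_α R(-e_α)`: its degree `d` part consists of the vectors
whose `α`-th entry has degree `d - e α`, and vanishes if `d < e α`. -/
def freeGrading (e : ι → ℕ) (d : ℕ) : Submodule k (ι → R) :=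
  Submodule.pi Set.univ fun α => if e α ≤ d then 𝒜 (d - e α) else ⊥

variable {𝒜}

theorem mem_freeGrading_iff {e : ι → ℕ} {d : ℕ} {w : ι → R} :
    w ∈ freeGrading 𝒜 e d ↔ ∀ α, w α = 0 ∨ e α ≤ d ∧ w α ∈ 𝒜 (d - e α) := by
  simp only [freeGrading, Submodule.mem_pi, Set.mem_univ, true_imp_iff]
  refine forall_congr' fun α => ?_
  split_ifs with h
  · simp only [h, true_and, iff_or_self]
    rintro h0
    simp [h0]
  · simp [h]

theorem single_mem_freeGrading [DecidableEq ι] (e : ι → ℕ) (α : ι) {i : ℕ} {a : R} (ha : a ∈ 𝒜 i) :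
    Pi.single α a ∈ freeGrading 𝒜 e (e α + i) := by
  refine mem_freeGrading_iff.2 fun β => ?_
  obtain rfl | hβ := eq_or_ne β α
  · simp [ha]
  · simp [hβ]

theorem cons_mem_freeGrading {m : ℕ} {e : Fin m → ℕ} {d i : ℕ} {a : R} {w : Fin m → R}
    (ha : a ∈ 𝒜 i) (hw : w ∈ freeGrading 𝒜 e (d + i)) :
    (Fin.cons a w : Fin (m + 1) → R) ∈ freeGrading 𝒜 (Fin.cons d e) (d + i) := by
  refine mem_freeGrading_iff.2 (Fin.cases ?_ fun j => ?_)
  · simp [ha]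
  · simpa using mem_freeGrading_iff.1 hw j

theorem linearCombination_mem_of_mem_freeGrading [Fintype ι] {M τ : Type*} [AddCommMonoid M]
    [Module R M] [SetLike τ M] [AddSubmonoidClass τ M] {ℳ : ℕ → τ} [SetLike.GradedSMul 𝒜 ℳ]
    {e : ι → ℕ} {v : ι → M} (hv : ∀ α, v α ∈ ℳ (e α)) {d : ℕ} {w : ι → R}
    (hw : w ∈ freeGrading 𝒜 e d) : Fintype.linearCombination R v w ∈ ℳ d := by
  rw [Fintype.linearCombination_apply]
  refine sum_mem fun α _ => ?_
  obtain h0 | ⟨hd, hα⟩ := mem_freeGrading_iff.1 hw α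
  · simp [h0]
  · have hsmul := SetLike.GradedSMul.smul_mem hα (hv α)
    rwa [vadd_eq_add, Nat.sub_add_cancel hd] at hsmul

instance freeGrading.gradedSMul [SetLike.GradedMonoid 𝒜] (e : ι → ℕ) :
    SetLike.GradedSMul 𝒜 (freeGrading 𝒜 e) where
  smul_mem {i d} a w ha hw := mem_freeGrading_iff.2 fun α => by
    obtain h0 | ⟨hd, hα⟩ := mem_freeGrading_iff.1 hw α
    · simp [h0]
    · refine .inr ⟨hd.trans (Nat.le_add_left d i), ?_⟩
      rw [vadd_eq_add, Nat.add_sub_assoc hd]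
      exact SetLike.mul_mem_graded ha hα

theorem decompose_eq_zero_of_mem_freeGrading [Decomposition 𝒜] {e : ι → ℕ} {d d' : ℕ} {w : ι → R}
    (hw : w ∈ freeGrading 𝒜 e d) (hd : d ≠ d') {α : ι} (hα : e α ≤ d') :
    (decompose 𝒜 (w α) (d' - e α) : R) = 0 := by
  obtain h0 | ⟨hle, hmem⟩ := mem_freeGrading_iff.1 hw α
  · simp [h0]
  · exact decompose_of_mem_ne 𝒜 hmem (by omega)

theorem iSupIndep_freeGrading [Decomposition 𝒜] (e : ι → ℕ) : iSupIndep (freeGrading 𝒜 e) := by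
  refine iSupIndep_def.2 fun d => Submodule.disjoint_def.2 fun w hd hne => funext fun α => ?_
  have decompose_eq_zero (hα : e α ≤ d) : (decompose 𝒜 (w α) (d - e α) : R) = 0 := by
    clear hd
    rw [iSup_subtype'] at hne
    induction hne using Submodule.iSup_induction' with
    | zero => simp
    | add x y _ _ hx hy => simp [decompose_add, hx, hy]
    | mem d' x hx => exact decompose_eq_zero_of_mem_freeGrading hx d'.2 hα
  obtain h0 | ⟨hα, hmem⟩ := mem_freeGrading_iff.1 hd α
  · exact h0
  · rw [← decompose_of_mem_same 𝒜 hmem, decompose_eq_zero hα, Pi.zero_apply]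

theorem iSup_freeGrading_eq_top [Finite ι] [Decomposition 𝒜] (e : ι → ℕ) :
    ⨆ d, freeGrading 𝒜 e d = ⊤ := by
  classical
  have := Fintype.ofFinite ι
  refine Submodule.eq_top_iff'.2 fun w => ?_
  rw [← Finset.univ_sum_single w]
  refine sum_mem fun α _ => ?_
  generalize w α = a
  induction a using Decomposition.inductionOn 𝒜 with
  | zero => simp
  | homogeneous a => exact Submodule.mem_iSup_of_mem _ (single_mem_freeGrading e α a.2)
  | add a b ha hb => rw [Pi.single_add]; exact add_mem ha hb

noncomputable instance freeGrading.decomposition [Finite ι] [Decomposition 𝒜] (e : ι → ℕ) :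
    Decomposition (freeGrading 𝒜 e) :=
  (isInternal_submodule_of_iSupIndep_of_iSup_eq_top (iSupIndep_freeGrading e)
    (iSup_freeGrading_eq_top e)).chooseDecomposition

theorem exists_mem_freeGrading_linearCombination_eq [Fintype ι] [Decomposition 𝒜] {M τ : Type*}
    [AddCommMonoid M] [Module R M] [SetLike τ M] [AddSubmonoidClass τ M] {ℳ : ℕ → τ}
    [Decomposition ℳ] [SetLike.GradedSMul 𝒜 ℳ] {e : ι → ℕ} {v : ι → M} (hv : ∀ α, v α ∈ ℳ (e α))
    {d : ℕ} {y : M} (hy : y ∈ ℳ d) (hspan : y ∈ Submodule.span R (Set.range v)) :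
    ∃ c ∈ freeGrading 𝒜 e d, Fintype.linearCombination R v c = y := by
  rw [← Fintype.range_linearCombination] at hspan
  obtain ⟨c, rfl⟩ := hspan
  exact exists_mem_eq_of_mapsTo (freeGrading 𝒜 e) ℳ
    (Fintype.linearCombination R v).toAddMonoidHom
    (fun _ _ => linearCombination_mem_of_mem_freeGrading hv) hy

end FreeGrading

theorem isPrime_span_of_subset_homogeneousSubmodule_one {σ k : Type*} [Field k]
    {T : Set (MvPolynomial σ k)} (hT : T ⊆ homogeneousSubmodule σ k 1) :
    (Ideal.span T).IsPrime := by
  -- For a linear projection `p` onto `⟨T⟩`, the ideal `(T)` is the kernel of `X i ↦ X i - p (X i)`.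
  obtain ⟨p, hp⟩ := (LinearMap.id : Submodule.span k T →ₗ[k] Submodule.span k T).exists_extend
  let φ : MvPolynomial σ k →ₐ[k] MvPolynomial σ k := aeval fun i => X i - (p (X i)).1
  have φ_eq_sub : ∀ l ∈ homogeneousSubmodule σ k 1, φ l = l - p l := by
    let ψ : MvPolynomial σ k →ₗ[k] MvPolynomial σ k :=
      LinearMap.id - (Submodule.span k T).subtype ∘ₗ p
    have hX : Set.EqOn φ.toLinearMap ψ (Set.range X) := by
      rintro _ ⟨i, rfl⟩
      simp [φ, ψ]
    rw [homogeneousSubmodule_one_eq_span_X]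
    exact fun l hl => LinearMap.eqOn_span hX hl
  have span_le_ker : Ideal.span T ≤ RingHom.ker φ := by
    refine Ideal.span_le.2 fun t ht => ?_
    have hpt : (p t : MvPolynomial σ k) = t :=
      congrArg Subtype.val (LinearMap.congr_fun hp ⟨t, Submodule.subset_span ht⟩)
    rw [SetLike.mem_coe, RingHom.mem_ker, φ_eq_sub t (hT ht), hpt, sub_self]
  have mk_comp_φ : (Ideal.Quotient.mkₐ k (Ideal.span T)).comp φ =
      Ideal.Quotient.mkₐ k (Ideal.span T) := by
    refine algHom_ext fun i => Ideal.Quotient.eq.2 ?_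
    have hpX : (p (X i)).1 ∈ Ideal.span T := Submodule.span_le_restrictScalars k _ T (p (X i)).2
    simpa [φ] using hpX
  have ker_le_span : RingHom.ker φ ≤ Ideal.span T := by
    intro f hf
    rw [← Ideal.Quotient.eq_zero_iff_mem, ← Ideal.Quotient.mkₐ_eq_mk k, ← mk_comp_φ,
      AlgHom.comp_apply, RingHom.mem_ker.1 hf, map_zero]
  rw [span_le_ker.antisymm ker_le_span]
  exact RingHom.ker_isPrime φ

namespace IsLinearIdeal

variable {k : Type*} [Field k] {n : ℕ} {I J : Ideal (MvP k n)}

theorem isPrime (hI : IsLinearIdeal I) : I.IsPrime := by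
  obtain ⟨T, hT, rfl⟩ := hI
  exact isPrime_span_of_subset_homogeneousSubmodule_one hT

theorem isHomogeneous (hI : IsLinearIdeal I) :
    I.IsHomogeneous (homogeneousSubmodule (Fin (n + 1)) k) := by
  obtain ⟨T, hT, rfl⟩ := hI
  exact Ideal.homogeneous_span _ T fun t ht => ⟨1, hT ht⟩

theorem bot : IsLinearIdeal (⊥ : Ideal (MvP k n)) :=
  ⟨∅, Set.empty_subset _, Ideal.span_empty.symm⟩

theorem sup (hI : IsLinearIdeal I) (hJ : IsLinearIdeal J) : IsLinearIdeal (I ⊔ J) := by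
  obtain ⟨T, hT, rfl⟩ := hI
  obtain ⟨T', hT', rfl⟩ := hJ
  exact ⟨T ∪ T', Set.union_subset hT hT', (Ideal.span_union T T').symm⟩

theorem induction_on (hI : IsLinearIdeal I) {motive : Ideal (MvP k n) → Prop} (bot : motive ⊥)
    (sup_span_singleton : ∀ J l, IsLinearIdeal J → l ∈ I →
      l ∈ homogeneousSubmodule (Fin (n + 1)) k 1 → motive J → motive (J ⊔ Ideal.span {l})) :
    motive I := by
  classical
  obtain ⟨T, hT, rfl⟩ := hI
  obtain ⟨T', hT', hspan⟩ :=
    (Submodule.fg_span_iff_fg_span_finset_subset T).1 (IsNoetherian.noetherian (Ideal.span T))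
  suffices ∀ F : Finset (MvP k n), F ⊆ T' → motive (Ideal.span F) by
    rw [Ideal.span, hspan]
    exact this T' subset_rfl
  intro F hF
  induction F using Finset.induction_on with
  | empty => simpa using bot
  | insert l F _ ih =>
    obtain ⟨hl, hF⟩ := Finset.insert_subset_iff.1 hF
    rw [Finset.coe_insert, Ideal.span_insert, sup_comm]
    exact sup_span_singleton _ l ⟨F, fun f hf => hT (hT' (hF hf)), rfl⟩
      (Ideal.subset_span (hT' hl)) (hT (hT' hl)) (ih hF)

end IsLinearIdeal

section Colon

variable {R M P : Type*} [CommRing R] [AddCommGroup M] [Module R M] [AddCommGroup P] [Module R P]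

theorem sup_span_singleton_add_of_mem {N : Submodule R M} {x : M} (hx : x ∈ N) (y : M) :
    N ⊔ Submodule.span R {x + y} = N ⊔ Submodule.span R {y} := by
  have le (x y : M) (hx : x ∈ N) : N ⊔ Submodule.span R {x + y} ≤ N ⊔ Submodule.span R {y} := by
    refine sup_le le_sup_left ((Submodule.span_singleton_le_iff_mem _ _).2 ?_)
    exact Submodule.add_mem_sup hx (Submodule.mem_span_singleton_self y)
  exact (le x y hx).antisymm (by simpa using le (-x) (x + y) (N.neg_mem hx))

theorem comap_colon_singleton (Q : Submodule R P) (f : M →ₗ[R] P) (x : M) :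
    (Q.comap f).colon {x} = Q.colon {f x} := by
  ext a
  simp only [Submodule.mem_colon_singleton, Submodule.mem_comap, map_smul]

theorem colon_singleton_eq_self_of_isPrime {I : Ideal R} (hI : I.IsPrime) {a : R} (ha : a ∉ I) :
    I.colon {a} = I := by
  ext b
  rw [Submodule.mem_colon_singleton, smul_eq_mul, hI.mul_mem_iff_mem_or_mem, or_iff_left ha]

theorem inf_comap_sup_span_singleton (K : Submodule R M) (Q : Submodule R P) (f : M →ₗ[R] P)
    {x : M} (hx : x ∈ K) :
    K ⊓ (Q ⊔ Submodule.span R {f x}).comap f = K ⊓ Q.comap f ⊔ Submodule.span R {x} := by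
  refine le_antisymm ?_ (sup_le (inf_le_inf_left K (Submodule.comap_mono le_sup_left)) ?_)
  · rintro y ⟨hyK, hy⟩
    obtain ⟨z, hz, w, hw, hzw⟩ := Submodule.mem_sup.1 hy
    obtain ⟨a, rfl⟩ := Submodule.mem_span_singleton.1 hw
    have hfz : f (y - a • x) = z := by rw [map_sub, map_smul, ← hzw, add_sub_cancel_right]
    rw [← sub_add_cancel y (a • x)]
    exact Submodule.add_mem_sup ⟨K.sub_mem hyK (K.smul_mem a hx), by rwa [← hfz] at hz⟩
      (Submodule.smul_mem _ a (Submodule.mem_span_singleton_self x))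
  · rw [Submodule.span_singleton_le_iff_mem]
    exact ⟨hx, Submodule.mem_sup_right (Submodule.mem_span_singleton_self _)⟩

end Colon

section LinearCombinationCons

variable {R M : Type*} [CommRing R] [AddCommGroup M] [Module R M] {m : ℕ}

theorem linearCombination_cons (x : M) (v : Fin m → M) (a : R) (w : Fin m → R) :
    Fintype.linearCombination R (Fin.cons x v : Fin (m + 1) → M) (Fin.cons a w : Fin (m + 1) → R) =
      a • x + Fintype.linearCombination R v w := by
  simp [Fintype.linearCombination_apply, Fin.sum_univ_succ]

theorem ker_linearCombination_cons_inf_ker_proj (x : M) (v : Fin m → M) :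
    LinearMap.ker (Fintype.linearCombination R (Fin.cons x v : Fin (m + 1) → M)) ⊓
        LinearMap.ker (LinearMap.proj 0) =
      (LinearMap.ker (Fintype.linearCombination R v)).map (LinearMap.vecCons 0 LinearMap.id) := by
  ext w
  refine Fin.consCases (fun a w => ?_) w
  simp only [Submodule.mem_inf, LinearMap.mem_ker, linearCombination_cons, LinearMap.proj_apply,
    Fin.cons_zero, Submodule.mem_map, LinearMap.vecCons_apply, LinearMap.zero_apply,
    LinearMap.id_apply, Matrix.vecCons, Fin.cons_inj]
  constructor
  · rintro ⟨h, rfl⟩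
    exact ⟨w, by simpa using h, rfl, rfl⟩
  · rintro ⟨w, h, rfl, rfl⟩
    simpa using h

theorem map_proj_ker_linearCombination_cons (x : M) (v : Fin m → M) :
    (LinearMap.ker (Fintype.linearCombination R (Fin.cons x v : Fin (m + 1) → M))).map
      (LinearMap.proj 0) = (Submodule.span R (Set.range v)).colon {x} := by
  ext a
  rw [Submodule.mem_colon_singleton, ← Fintype.range_linearCombination, Submodule.mem_map]
  constructor
  · rintro ⟨w, hw, rfl⟩
    induction w using Fin.consCases with | _ a w
    rw [LinearMap.mem_ker, linearCombination_cons] at hw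
    exact ⟨-w, by rw [map_neg, neg_eq_of_add_eq_zero_left hw]; rfl⟩
  · rintro ⟨c, hc⟩
    refine ⟨Fin.cons a (-c), ?_, rfl⟩
    rw [LinearMap.mem_ker, linearCombination_cons, map_neg, hc, add_neg_cancel]

end LinearCombinationCons

section LinearQuotients

variable {k : Type*} [Field k] {n : ℕ} {M M' τ τ' : Type*} [AddCommGroup M] [Module (MvP k n) M]
  [AddCommGroup M'] [Module (MvP k n) M'] [SetLike τ M] [SetLike τ' M'] {ℳ : ℕ → τ} {ℳ' : ℕ → τ'}
  {N : Submodule (MvP k n) M} {r : ℕ}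

/-- A submodule has linear quotients, with generators in degrees at most `r`, if it is generated by
homogeneous elements `x₁, …, x_m` of degrees at most `r` such that each colon ideal
`(x₁, …, x_{j-1}) : x_j` is linear. -/
inductive HasLinearQuotients (ℳ : ℕ → τ) (r : ℕ) : Submodule (MvP k n) M → Prop
  | bot : HasLinearQuotients ℳ r ⊥
  | sup_span_singleton {N : Submodule (MvP k n) M} {x : M} {d : ℕ} (hN : HasLinearQuotients ℳ r N)
      (hx : x ∈ ℳ d) (hd : d ≤ r) (hcolon : IsLinearIdeal (N.colon {x})) :
      HasLinearQuotients ℳ r (N ⊔ Submodule.span (MvP k n) {x})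

/-- A step in the construction of a free resolution: the graded free module `⨁_α S(-e_α)`, with all
`e_α` at most `t`, together with the submodule of it that the next step has to cover. -/
structure ResolutionStage (k : Type*) [Field k] (n t : ℕ) where
  rank : ℕ
  degree : Fin rank → ℕ
  degree_le : ∀ α, degree α ≤ t
  relations : Submodule (MvP k n) (Fin rank → MvP k n)
  hasLinearQuotients :
    HasLinearQuotients (freeGrading (homogeneousSubmodule (Fin (n + 1)) k) degree) (t + 1) relations

namespace HasLinearQuotients

theorem map (hN : HasLinearQuotients ℳ r N) {g : M →ₗ[MvP k n] M'} (hg : Function.Injective g)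
    (hdeg : ∀ d, ∀ x ∈ ℳ d, g x ∈ ℳ' d) : HasLinearQuotients ℳ' r (N.map g) := by
  induction hN with
  | bot => rw [Submodule.map_bot]; exact bot
  | @sup_span_singleton N x d _ hx hd hcolon ih =>
    rw [← Submodule.comap_map_eq_of_injective hg N, comap_colon_singleton] at hcolon
    rw [Submodule.map_sup, Submodule.map_span, Set.image_singleton]
    exact ih.sup_span_singleton (hdeg d x hx) hd hcolon

-- As `J₀` grows to `J` by one linear form `l` at a time, the part of `K` that `π` maps into the
-- image of `J₀` under `q` grows by one generator, the lift of `q l`, with colon ideal `J₀ ⊔ ker q`.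
theorem of_map_le {P : Type*} [AddCommGroup P] [Module (MvP k n) P] {K : Submodule (MvP k n) M}
    {π : M →ₗ[MvP k n] P} {q : MvP k n →ₗ[MvP k n] P} {J : Ideal (MvP k n)} {d : ℕ}
    (hker : HasLinearQuotients ℳ r (K ⊓ LinearMap.ker π)) (hd : d ≤ r) (hJ : IsLinearIdeal J)
    (hq : IsLinearIdeal (LinearMap.ker q)) (hmap : K.map π ≤ Submodule.map q J)
    (hlift : ∀ l ∈ J, l ∈ homogeneousSubmodule (Fin (n + 1)) k 1 → ∃ s ∈ K, s ∈ ℳ d ∧ π s = q l) :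
    HasLinearQuotients ℳ r K := by
  suffices HasLinearQuotients ℳ r (K ⊓ (Submodule.map q J).comap π) by
    rwa [inf_eq_left.2 (Submodule.map_le_iff_le_comap.1 hmap)] at this
  refine hJ.induction_on
    (motive := fun J => HasLinearQuotients ℳ r (K ⊓ (Submodule.map q J).comap π)) ?_ ?_
  · rwa [Submodule.map_bot, Submodule.comap_bot]
  intro J₀ l hJ₀ hlJ hl ih
  obtain ⟨s, hsK, hs, hsl⟩ := hlift l hlJ hl
  rw [Submodule.map_sup, Ideal.span, Submodule.map_span, Set.image_singleton]
  by_cases hlJ₀ : l ∈ J₀ ⊔ LinearMap.ker q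
  · rw [← Submodule.comap_map_eq, Submodule.mem_comap,
      ← Submodule.span_singleton_le_iff_mem] at hlJ₀
    rwa [sup_eq_left.2 hlJ₀]
  have colon_eq : (K ⊓ (Submodule.map q J₀).comap π).colon {s} = J₀ ⊔ LinearMap.ker q := by
    rw [inf_comm, Submodule.colon_inf_eq_left_of_subset (Set.singleton_subset_iff.2 hsK),
      comap_colon_singleton, hsl, ← comap_colon_singleton, Submodule.comap_map_eq,
      colon_singleton_eq_self_of_isPrime (hJ₀.sup hq).isPrime hlJ₀]
  rw [← hsl, inf_comap_sup_span_singleton K _ π hsK]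
  exact ih.sup_span_singleton hs hd (colon_eq ▸ hJ₀.sup hq)

theorem sup_span_singleton_inf_of_mem {B W : Ideal (MvP k n)} {w : MvP k n} {d : ℕ}
    (h : HasLinearQuotients (homogeneousSubmodule (Fin (n + 1)) k) r (B ⊓ W)) (hd : d ≤ r)
    (hB : IsLinearIdeal B) (hw : w ∈ homogeneousSubmodule (Fin (n + 1)) k d) (hwW : w ∈ W) :
    HasLinearQuotients (homogeneousSubmodule (Fin (n + 1)) k) r ((B ⊔ Ideal.span {w}) ⊓ W) := by
  by_cases hwB : w ∈ B
  · rwa [sup_eq_left.2 ((Ideal.span_singleton_le_iff_mem B).2 hwB)]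
  have colon_eq : (B ⊓ W).colon {w} = B := by
    rw [Submodule.colon_inf_eq_left_of_subset (Set.singleton_subset_iff.2 hwW),
      colon_singleton_eq_self_of_isPrime hB.isPrime hwB]
  rw [sup_comm, sup_inf_assoc_of_le B ((Ideal.span_singleton_le_iff_mem W).2 hwW), sup_comm]
  exact h.sup_span_singleton hw hd (colon_eq.symm ▸ hB)

-- Modulo `B`, the new ideal becomes the image of `W` under multiplication by `y`, of kernel `B`.
theorem sup_span_singleton_inf_of_notMem {B W : Ideal (MvP k n)} {y : MvP k n}
    (h : HasLinearQuotients (homogeneousSubmodule (Fin (n + 1)) k) r (B ⊓ W)) (hr : 2 ≤ r)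
    (hB : IsLinearIdeal B) (hW : IsLinearIdeal W)
    (hy : y ∈ homogeneousSubmodule (Fin (n + 1)) k 1) (hyBW : y ∉ B ⊔ W) :
    HasLinearQuotients (homogeneousSubmodule (Fin (n + 1)) k) r ((B ⊔ Ideal.span {y}) ⊓ W) := by
  have ker_q : LinearMap.ker (B.mkQ ∘ₗ LinearMap.toSpanSingleton (MvP k n) _ y) = B := by
    have hyB : y ∉ B := fun hyB => hyBW (Ideal.mem_sup_left hyB)
    rw [LinearMap.ker_comp, Submodule.ker_mkQ]
    nth_rw 2 [← colon_singleton_eq_self_of_isPrime hB.isPrime hyB]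
    ext a
    rw [Submodule.mem_comap, LinearMap.toSpanSingleton_apply, Submodule.mem_colon_singleton]
  refine of_map_le (π := B.mkQ) (q := B.mkQ ∘ₗ LinearMap.toSpanSingleton (MvP k n) _ y) ?_ hr hW
    (ker_q.symm ▸ hB) ?_ fun w hwW hw => ⟨w * y, ⟨?_, W.mul_mem_right y hwW⟩, hw.mul hy, rfl⟩
  · rwa [Submodule.ker_mkQ, inf_comm, ← inf_assoc, inf_sup_self]
  · rintro _ ⟨f, ⟨hf, hfW⟩, rfl⟩
    obtain ⟨b, hb, c, hc, rfl⟩ := Submodule.mem_sup.1 hf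
    obtain ⟨a, rfl⟩ := Ideal.mem_span_singleton'.1 hc
    have haBW : a ∈ B ⊔ W := by
      refine ((hB.sup hW).isPrime.mem_or_mem ?_).resolve_right hyBW
      simpa using Ideal.sub_mem _ (Ideal.mem_sup_right hfW) (Ideal.mem_sup_left hb)
    obtain ⟨b', hb', w, hw, rfl⟩ := Submodule.mem_sup.1 haBW
    refine ⟨w, hw, (Submodule.Quotient.eq B).2 ?_⟩
    have sub_eq : w * y - (b + (b' + w) * y) = -(b + b' * y) := by ring
    rw [LinearMap.toSpanSingleton_apply, smul_eq_mul, sub_eq]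
    exact B.neg_mem (B.add_mem hb (B.mul_mem_right y hb'))
  · exact Ideal.mem_sup_right (Ideal.mul_mem_left _ w (Ideal.mem_span_singleton_self y))

theorem sup_span_singleton_inf {B W : Ideal (MvP k n)} {y : MvP k n}
    (h : HasLinearQuotients (homogeneousSubmodule (Fin (n + 1)) k) r (B ⊓ W)) (hr : 2 ≤ r)
    (hB : IsLinearIdeal B) (hW : IsLinearIdeal W)
    (hy : y ∈ homogeneousSubmodule (Fin (n + 1)) k 1) :
    HasLinearQuotients (homogeneousSubmodule (Fin (n + 1)) k) r ((B ⊔ Ideal.span {y}) ⊓ W) := by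
  by_cases hyBW : y ∈ B ⊔ W
  · obtain ⟨b, hb, w, hwW, hw, rfl⟩ :=
      exists_add_eq_of_mem_sup_of_isHomogeneous hB.isHomogeneous hW.isHomogeneous hy hyBW
    rw [Ideal.span, sup_span_singleton_add_of_mem hb]
    exact h.sup_span_singleton_inf_of_mem (one_le_two.trans hr) hB hw hwW
  · exact h.sup_span_singleton_inf_of_notMem hr hB hW hy hyBW

theorem inf_of_isLinearIdeal {I J : Ideal (MvP k n)} (hI : IsLinearIdeal I)
    (hJ : IsLinearIdeal J) :
    HasLinearQuotients (homogeneousSubmodule (Fin (n + 1)) k) 2 (I ⊓ J) := by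
  refine hI.induction_on (motive := fun B => HasLinearQuotients _ 2 (B ⊓ J)) ?_ ?_
  · rw [bot_inf_eq]
    exact bot
  · exact fun B y hB _ hy h => h.sup_span_singleton_inf le_rfl hB hJ hy

variable [AddSubmonoidClass τ M] [DirectSum.Decomposition ℳ]
  [SetLike.GradedSMul (homogeneousSubmodule (Fin (n + 1)) k) ℳ]

theorem ker_linearCombination_cons {m : ℕ} {e : Fin m → ℕ} {v : Fin m → M} {x : M} {d : ℕ}
    (hker : HasLinearQuotients (freeGrading (homogeneousSubmodule (Fin (n + 1)) k) e) (r + 1)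
      (LinearMap.ker (Fintype.linearCombination (MvP k n) v)))
    (hv : ∀ j, v j ∈ ℳ (e j)) (hx : x ∈ ℳ d) (hd : d ≤ r)
    (hcolon : IsLinearIdeal ((Submodule.span (MvP k n) (Set.range v)).colon {x})) :
    HasLinearQuotients
      (freeGrading (homogeneousSubmodule (Fin (n + 1)) k) (Fin.cons d e : Fin (m + 1) → ℕ)) (r + 1)
      (LinearMap.ker (Fintype.linearCombination (MvP k n) (Fin.cons x v : Fin (m + 1) → M))) := by
  refine of_map_le (π := LinearMap.proj (φ := fun _ => MvP k n) 0) (q := LinearMap.id) ?_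
    (Nat.add_le_add_right hd 1) hcolon (by rw [LinearMap.ker_id]; exact IsLinearIdeal.bot) ?_ ?_
  · rw [ker_linearCombination_cons_inf_ker_proj]
    refine hker.map (Fin.cons_right_injective (α := fun _ => MvP k n) 0) fun i w hw => ?_
    exact mem_freeGrading_iff.2 (Fin.cases (.inl rfl) (mem_freeGrading_iff.1 hw))
  · rw [map_proj_ker_linearCombination_cons, Submodule.map_id]
  · intro l hlcolon hl
    have hlx : l • x ∈ ℳ (d + 1) := add_comm 1 d ▸ SetLike.GradedSMul.smul_mem hl hx
    obtain ⟨c, hc, hcl⟩ := exists_mem_freeGrading_linearCombination_eq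
      (𝒜 := homogeneousSubmodule (Fin (n + 1)) k) hv hlx (Submodule.mem_colon_singleton.1 hlcolon)
    refine ⟨Fin.cons l (-c), ?_, cons_mem_freeGrading hl (neg_mem hc), rfl⟩
    rw [LinearMap.mem_ker, linearCombination_cons, map_neg, hcl, add_neg_cancel]

theorem exists_graded_generators (hN : HasLinearQuotients ℳ r N) :
    ∃ (m : ℕ) (e : Fin m → ℕ) (v : Fin m → M), (∀ j, e j ≤ r) ∧ (∀ j, v j ∈ ℳ (e j)) ∧
      Submodule.span (MvP k n) (Set.range v) = N ∧
      HasLinearQuotients (freeGrading (homogeneousSubmodule (Fin (n + 1)) k) e) (r + 1)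
        (LinearMap.ker (Fintype.linearCombination (MvP k n) v)) := by
  induction hN with
  | bot =>
    refine ⟨0, Fin.elim0, Fin.elim0, nofun, nofun, by simp, ?_⟩
    rw [Subsingleton.elim (LinearMap.ker _) ⊥]
    exact bot
  | sup_span_singleton _ hx hd hcolon ih =>
    obtain ⟨m, e, v, he, hv, rfl, hker⟩ := ih
    refine ⟨m + 1, Fin.cons _ e, Fin.cons _ v, Fin.cases hd he, Fin.cases hx hv, ?_,
      hker.ker_linearCombination_cons hv hx hd hcolon⟩
    rw [Fin.range_cons, Submodule.span_insert, sup_comm]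

theorem exists_resolutionStage (hN : HasLinearQuotients ℳ r N) :
    ∃ (s : ResolutionStage k n r) (δ : (Fin s.rank → MvP k n) →ₗ[MvP k n] M),
      LinearMap.range δ = N ∧ LinearMap.ker δ = s.relations ∧
        ∀ β, δ (Pi.single β 1) ∈ ℳ (s.degree β) := by
  obtain ⟨m, e, v, he, hv, hspan, hker⟩ := hN.exists_graded_generators
  refine ⟨⟨m, e, he, _, hker⟩, Fintype.linearCombination (MvP k n) v, ?_, rfl, fun β => ?_⟩
  · rw [Fintype.range_linearCombination, hspan]
  · rw [Fintype.linearCombination_apply_single, one_smul]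
    exact hv β

theorem idealIsRegular {I : Ideal (MvP k n)}
    (hI : HasLinearQuotients (homogeneousSubmodule (Fin (n + 1)) k) r I) : IdealIsRegular I r := by
  obtain ⟨s₀, ε, range_ε, ker_ε, ε_mem⟩ := hI.exists_resolutionStage
  choose next δ range_δ ker_δ δ_mem using fun (t : ℕ) (s : ResolutionStage k n t) =>
    s.hasLinearQuotients.exists_resolutionStage
  let stage (i : ℕ) : ResolutionStage k n (r + i) := Nat.rec s₀ (fun i s => next (r + i) s) i
  refine ⟨fun i => (stage i).rank, fun i => (stage i).degree, fun i => δ (r + i) (stage i), ε,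
    range_ε, ker_ε.trans (range_δ r s₀).symm, fun i => ?_, ε_mem, fun i β => ?_, fun i β => ?_⟩
  · exact (ker_δ (r + i) (stage i)).trans (range_δ (r + (i + 1)) (stage (i + 1))).symm
  · exact mem_freeGrading_iff.1 (δ_mem (r + i) (stage i) β)
  · exact_mod_cast (stage i).degree_le β

end HasLinearQuotients

end LinearQuotients

/-- The intersection of two linear ideals is `2`-regular. -/
theorem inter_two_linear_ideals_two_regular {k : Type*} [Field k] {n : ℕ}
    (I₁ I₂ : Ideal (MvP k n)) (h₁ : IsLinearIdeal I₁) (h₂ : IsLinearIdeal I₂) :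
    IdealIsRegular (I₁ ⊓ I₂) 2 :=
  (HasLinearQuotients.inf_of_isLinearIdeal h₁ h₂).idealIsRegular
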